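/- For every ε > 0 there exists a nonzero continuously differentiable function φ : ℝ² → ℝ with compact support contained in the open upper half-plane ℝ × (0, ∞) such that ∫∫ ((∂φ/∂x)(x,y)² + (∂φ/∂y)(x,y)²) dx dy < (1/4 + ε) ∫∫ φ(x,y)²/y² dx dy. Consequently the infimum over all nonzero compactly supported C¹ functions on ℝ × (0,∞) of the quotient (∫∫ |∇φ|² dx dy)/(∫∫ φ²/y² dx dy) equals exactly 1/4. -/

import Mathlib

open MeasureTheory

lemma aux_contDiff {E : Type*} [NormedAddCommGroup E] [NormedSpace ℝ E] {f : E → ℝ} {K : Set E}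
    (hK : IsClosed K) (hs : ∀ x, x ∉ K → f x = 0) (h : ∀ x ∈ K, ContDiffAt ℝ 1 f x) :
    ContDiff ℝ 1 f := by
  rw [contDiff_iff_contDiffAt]
  intro x
  by_cases hx : x ∈ K
  · exact h x hx
  · have : f =ᶠ[nhds x] fun _ => (0 : ℝ) := by
      filter_upwards [hK.isOpen_compl.mem_nhds hx] with y hy
      exact hs y hy
    exact contDiffAt_const.congr_of_eventuallyEq this

lemma aux_zero {φ : ℝ × ℝ → ℝ} (hsub : tsupport φ ⊆ {p : ℝ × ℝ | 0 < p.2}) {p : ℝ × ℝ}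
    (hp : p.2 ≤ 0) : φ p = 0 := by
  apply image_eq_zero_of_notMem_tsupport
  intro h
  have := hsub h
  simp only [Set.mem_ofPred_eq] at this
  linarith

lemma aux_smooth {φ : ℝ × ℝ → ℝ} (hφ : ContDiff ℝ 1 φ)
    (hsub : tsupport φ ⊆ {p : ℝ × ℝ | 0 < p.2}) (k : ℕ) :
    ContDiff ℝ 1 (fun p : ℝ × ℝ => φ p ^ 2 / p.2 ^ k) := by
  apply aux_contDiff (isClosed_tsupport φ)
  · intro x hx
    simp [image_eq_zero_of_notMem_tsupport hx]
  · intro x hx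
    have h2 : (0 : ℝ) < x.2 := hsub hx
    exact (hφ.contDiffAt.pow 2).div (contDiffAt_snd.pow k) (by positivity)

lemma aux_cs {φ : ℝ × ℝ → ℝ} (hc : HasCompactSupport φ) (k : ℕ) :
    HasCompactSupport (fun p : ℝ × ℝ => φ p ^ 2 / p.2 ^ k) := by
  apply hc.mono
  intro x hx h0
  apply hx
  simp [h0]

lemma aux_int_fderiv {G : ℝ × ℝ → ℝ} (hG : ContDiff ℝ 1 G) (hc : HasCompactSupport G) :
    ∫ p : ℝ × ℝ, fderiv ℝ G p (0, 1) = 0 := by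
  have hcont : Continuous (fun p => fderiv ℝ G p (0, 1)) :=
    (hG.continuous_fderiv one_ne_zero).clm_apply continuous_const
  have hcs : HasCompactSupport (fun p => fderiv ℝ G p (0, 1)) := hc.fderiv_apply (𝕜 := ℝ) (0, 1)
  have key := integral_prod (μ := (volume : Measure ℝ)) (ν := (volume : Measure ℝ)) _
    (hcont.integrable_of_hasCompactSupport hcs)
  rw [Measure.volume_eq_prod, key]
  have hemb : ∀ x : ℝ, Topology.IsClosedEmbedding (fun y : ℝ => (x, y)) := fun x =>
    Function.LeftInverse.isClosedEmbedding (f := Prod.snd) (fun _ => rfl) continuous_snd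
      (by fun_prop)
  have : ∀ x : ℝ, ∫ y : ℝ, fderiv ℝ G (x, y) (0, 1) = 0 := by
    intro x
    apply integral_eq_zero_of_hasDerivAt_of_integrable (f := fun y => G (x, y))
    · intro y
      have h1 : HasFDerivAt G (fderiv ℝ G (x, y)) (x, y) :=
        (hG.differentiable one_ne_zero _).hasFDerivAt
      have h2 : HasDerivAt (fun y : ℝ => (x, y)) ((0 : ℝ), (1 : ℝ)) y :=
        (hasDerivAt_const y x).prodMk (hasDerivAt_id y)
      exact h1.comp_hasDerivAt y h2
    · exact (hcont.comp (by fun_prop : Continuous fun y : ℝ => (x, y))).integrable_of_hasCompactSupport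
        (hcs.comp_isClosedEmbedding (hemb x))
    · exact (hG.continuous.comp (by fun_prop : Continuous fun y : ℝ => (x, y))).integrable_of_hasCompactSupport
        (hc.comp_isClosedEmbedding (hemb x))
  simp [this]

lemma aux_lower {φ : ℝ × ℝ → ℝ} (hφ : ContDiff ℝ 1 φ) (hc : HasCompactSupport φ)
    (hsub : tsupport φ ⊆ {p : ℝ × ℝ | 0 < p.2}) :
    1 / 4 * (∫ p : ℝ × ℝ, φ p ^ 2 / p.2 ^ 2) ≤
      ∫ p : ℝ × ℝ, (fderiv ℝ φ p (1, 0) ^ 2 + fderiv ℝ φ p (0, 1) ^ 2) := by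
  set G : ℝ × ℝ → ℝ := fun p => φ p ^ 2 / p.2 ^ 1 with hGdef
  have hG : ContDiff ℝ 1 G := aux_smooth hφ hsub 1
  have hGc : HasCompactSupport G := aux_cs hc 1
  have h0 := aux_int_fderiv hG hGc
  have hGi : Integrable (fun p => fderiv ℝ G p (0, 1)) :=
    ((hG.continuous_fderiv one_ne_zero).clm_apply continuous_const).integrable_of_hasCompactSupport
      (hGc.fderiv_apply (𝕜 := ℝ) (0, 1))
  have hDi : Integrable (fun p : ℝ × ℝ => φ p ^ 2 / p.2 ^ 2) :=
    (aux_smooth hφ hsub 2).continuous.integrable_of_hasCompactSupport (aux_cs hc 2)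
  have hd : ∀ v : ℝ × ℝ, Integrable (fun p : ℝ × ℝ => fderiv ℝ φ p v ^ 2) := by
    intro v
    apply Continuous.integrable_of_hasCompactSupport
    · exact ((hφ.continuous_fderiv one_ne_zero).clm_apply continuous_const).pow 2
    · apply (hc.fderiv_apply (𝕜 := ℝ) v).mono
      intro x hx h0
      apply hx
      simp only at h0
      simp [h0]
  have e : 1 / 4 * (∫ p : ℝ × ℝ, φ p ^ 2 / p.2 ^ 2) =
      ∫ p : ℝ × ℝ, (1 / 4 * (φ p ^ 2 / p.2 ^ 2) + 1 / 2 * fderiv ℝ G p (0, 1)) := by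
    rw [integral_add (hDi.const_mul _) (hGi.const_mul _), integral_const_mul, integral_const_mul,
      h0]
    ring
  rw [e]
  apply integral_mono ((hDi.const_mul _).add (hGi.const_mul _)) ((hd _).add (hd _))
  intro p
  simp only [Pi.add_apply]
  by_cases hp : p ∈ tsupport φ
  · have hy : (0 : ℝ) < p.2 := hsub hp
    have h1 : HasFDerivAt φ (fderiv ℝ φ p) p := (hφ.differentiable one_ne_zero _).hasFDerivAt
    have h2 : HasFDerivAt (fun p : ℝ × ℝ => p.2) (ContinuousLinearMap.snd ℝ ℝ ℝ) p :=
      hasFDerivAt_snd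
    have h3 : HasDerivAt (fun t : ℝ => p + t • ((0 : ℝ), (1 : ℝ))) ((0 : ℝ), (1 : ℝ)) 0 := by
      simpa using ((hasDerivAt_id (0 : ℝ)).smul_const ((0 : ℝ), (1 : ℝ))).const_add p
    have hGd : HasFDerivAt G (fderiv ℝ G p) p := (hG.differentiable one_ne_zero _).hasFDerivAt
    have h3p : p + (0 : ℝ) • ((0 : ℝ), (1 : ℝ)) = p := by simp
    have a1 := HasFDerivAt.comp_hasDerivAt (0 : ℝ) (by rw [h3p]; exact h1) h3
    have a2 := HasFDerivAt.comp_hasDerivAt (0 : ℝ) (by rw [h3p]; exact h2) h3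
    have a3 := HasFDerivAt.comp_hasDerivAt (0 : ℝ) (by rw [h3p]; exact hGd) h3
    have a4 := (a1.pow 2).div (a2.pow 1) (by simp [hy.ne'])
    have a5 := a3.unique a4
    have h00 : p + ((0 : ℝ), (0 : ℝ)) = p := by simp
    simp [h00] at a5
    rw [a5]
    have : φ p ^ 2 / p.2 ^ 2 = (φ p / p.2) ^ 2 := by rw [div_pow]
    rw [this]
    have e2 : (2 * φ p * (fderiv ℝ φ p) (0, 1) * p.2 - φ p ^ 2) / p.2 ^ 2 =
      2 * (φ p / p.2) * (fderiv ℝ φ p) (0, 1) - (φ p / p.2) ^ 2 := by field_simp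
    rw [e2]
    nlinarith [sq_nonneg ((fderiv ℝ φ p) (1, 0)),
      sq_nonneg ((fderiv ℝ φ p) (0, 1) - φ p / p.2 / 2)]
  · have hz := image_eq_zero_of_notMem_tsupport hp
    have : fderiv ℝ G p = 0 := by
      apply image_eq_zero_of_notMem_tsupport (f := fderiv ℝ G)
      intro h
      apply hp
      apply closure_mono _ (tsupport_fderiv_subset ℝ h)
      intro x hx h0
      apply hx
      simp [hGdef, h0]
    simp only [this, hz]
    simp
    positivity

lemma aux_den_pos {φ : ℝ × ℝ → ℝ} (hφ : ContDiff ℝ 1 φ) (hc : HasCompactSupport φ)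
    (hsub : tsupport φ ⊆ {p : ℝ × ℝ | 0 < p.2}) (hne : φ ≠ 0) :
    0 < ∫ p : ℝ × ℝ, φ p ^ 2 / p.2 ^ 2 := by
  obtain ⟨x, hx⟩ := Function.ne_iff.1 hne
  have hx' : φ x ≠ 0 := hx
  have h2 : (0 : ℝ) < x.2 := hsub (subset_tsupport φ hx)
  apply (aux_smooth hφ hsub 2).continuous.integral_pos_of_hasCompactSupport_nonneg_nonzero
    (aux_cs hc 2) (x := x)
  · intro p
    simp only [Pi.zero_apply]
    positivity
  · positivity

lemma aux_exp (G : ℝ → ℝ) (hG : ∀ y ≤ 0, G y = 0) :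
    ∫ y, G y = ∫ t, Real.exp t * G (Real.exp t) := by
  have h := integral_image_eq_integral_abs_deriv_smul (s := Set.univ) (f := Real.exp)
    (f' := Real.exp) MeasurableSet.univ
    (fun x _ => (Real.hasDerivAt_exp x).hasDerivWithinAt) Real.exp_injective.injOn G
  rw [Set.image_univ, Real.range_exp, setIntegral_univ] at h
  simp only [abs_of_pos (Real.exp_pos _), smul_eq_mul] at h
  rw [← h, setIntegral_eq_integral_of_forall_compl_eq_zero]
  intro y hy
  exact hG y (by simpa using hy)

lemma aux_small (c d : ℝ) (hc : 0 ≤ c) (hd : 0 < d) : ∃ t : ℝ, 0 < t ∧ t ^ 2 * c < d := by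
  have hp : 0 < d / (c + 1) := by positivity
  refine ⟨Real.sqrt (d / (c + 1)), Real.sqrt_pos.2 hp, ?_⟩
  rw [Real.sq_sqrt hp.le, div_mul_eq_mul_div, div_lt_iff₀ (by positivity)]
  nlinarith

lemma aux_oneD (F : ℝ → ℝ) (hF : ContDiff ℝ 1 F) (hFc : HasCompactSupport F)
    (hF2 : ∀ s, F s ≠ 0 → |s| ≤ 2) (hA : 0 < ∫ s, F s ^ 2) (ε : ℝ) (hε : 0 < ε) :
    ∃ g : ℝ → ℝ, ContDiff ℝ 1 g ∧ HasCompactSupport g ∧ tsupport g ⊆ Set.Ioi 0 ∧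
      ∫ y, deriv g y ^ 2 < (1 / 4 + ε) * ∫ y, g y ^ 2 / y ^ 2 := by
  have hF'c : Continuous (deriv F) := hF.continuous_deriv le_rfl
  have hB : 0 ≤ ∫ s, deriv F s ^ 2 := integral_nonneg fun s => sq_nonneg _
  obtain ⟨δ, hδ, hδ2⟩ := aux_small _ _ hB (mul_pos hε hA)
  set g : ℝ → ℝ := fun y => Real.sqrt y * F (δ * Real.log y) with hg
  have hneg : ∀ y ≤ 0, g y = 0 := fun y hy => by simp [hg, Real.sqrt_eq_zero_of_nonpos hy]
  have hsupp : ∀ y, y ∉ Set.Icc (Real.exp (-(2 / δ))) (Real.exp (2 / δ)) → g y = 0 := by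
    intro y hy
    by_contra h
    have hy0 : 0 < y := by
      by_contra h'
      exact h (hneg y (not_lt.1 h'))
    have h1 : F (δ * Real.log y) ≠ 0 := fun h' => h (by simp [hg, h'])
    have h2 := abs_le.1 (hF2 _ h1)
    apply hy
    constructor
    · rw [← Real.le_log_iff_exp_le hy0, ← neg_div, div_le_iff₀ hδ]
      linarith
    · rw [← Real.log_le_iff_le_exp hy0, le_div_iff₀ hδ]
      linarith
  have hts : tsupport g ⊆ Set.Icc (Real.exp (-(2 / δ))) (Real.exp (2 / δ)) :=
    closure_minimal (fun y hy => by
      by_contra h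
      exact hy (hsupp y h)) isClosed_Icc
  have hg1 : ContDiff ℝ 1 g := by
    apply aux_contDiff isClosed_Icc hsupp
    intro y hy
    have hy0 : y ≠ 0 := ((Real.exp_pos _).trans_le hy.1).ne'
    exact (Real.contDiffAt_sqrt hy0).mul
      (hF.contDiffAt.comp y (contDiffAt_const.mul (Real.contDiffAt_log.2 hy0)))
  have hpos : tsupport g ⊆ Set.Ioi 0 := fun y hy => (Real.exp_pos _).trans_le (hts hy).1
  refine ⟨g, hg1, HasCompactSupport.of_support_subset_isCompact isCompact_Icc
    ((subset_tsupport g).trans hts), hpos, ?_⟩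
  have hder : ∀ t, deriv g (Real.exp t) =
      (F (δ * t) / 2 + δ * deriv F (δ * t)) / Real.sqrt (Real.exp t) := by
    intro t
    have hp := Real.exp_pos t
    have h1 := Real.hasDerivAt_sqrt hp.ne'
    have h2 : HasDerivAt F (deriv F (δ * Real.log (Real.exp t))) (δ * Real.log (Real.exp t)) :=
      (hF.differentiable one_ne_zero _).hasDerivAt
    have h3 := h2.comp (Real.exp t) ((Real.hasDerivAt_log hp.ne').const_mul δ)
    have h4 := (h1.mul h3).deriv
    have h5 : deriv g (Real.exp t) = _ := h4
    rw [h5]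
    simp only [Function.comp, Real.log_exp]
    have hs : 0 < Real.sqrt (Real.exp t) := Real.sqrt_pos.2 hp
    have hs2 : Real.exp t = Real.sqrt (Real.exp t) ^ 2 := (Real.sq_sqrt hp.le).symm
    generalize Real.sqrt (Real.exp t) = s at *
    rw [hs2]
    field_simp
  have hD : ∫ y, g y ^ 2 / y ^ 2 = δ⁻¹ * ∫ s, F s ^ 2 := by
    rw [aux_exp (fun y => g y ^ 2 / y ^ 2) (fun y hy => by simp [hneg y hy])]
    have := Measure.integral_comp_mul_left (fun s => F s ^ 2) δ
    rw [abs_of_pos (inv_pos.2 hδ), smul_eq_mul] at this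
    rw [← this]
    congr 1
    ext t
    have hp := Real.exp_pos t
    simp only [hg, Real.log_exp, mul_pow, Real.sq_sqrt hp.le]
    field_simp
  have hi1 : Integrable (fun s => F s ^ 2) :=
    (hF.continuous.pow 2).integrable_of_hasCompactSupport
      (hFc.mono fun x hx h0 => hx (by simp [h0]))
  have hi2 : Integrable (fun s => deriv F s ^ 2) :=
    (hF'c.pow 2).integrable_of_hasCompactSupport
      (hFc.deriv.mono fun x hx h0 => hx (by simp [h0]))
  have hi3 : Integrable (fun s => 2 * F s * deriv F s) :=
    ((continuous_const.mul hF.continuous).mul hF'c).integrable_of_hasCompactSupport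
      (hFc.mono fun x hx h0 => hx (by simp [h0]))
  have hi30 : ∫ s, 2 * F s * deriv F s = 0 := by
    apply integral_eq_zero_of_hasDerivAt_of_integrable (f := fun s => F s ^ 2) _ hi3 hi1
    intro s
    have h := ((hF.differentiable one_ne_zero s).hasDerivAt).fun_pow 2
    simpa using h
  have hN : ∫ y, deriv g y ^ 2 =
      δ⁻¹ * (1 / 4 * (∫ s, F s ^ 2) + δ ^ 2 * ∫ s, deriv F s ^ 2) := by
    rw [aux_exp (fun y => deriv g y ^ 2) (fun y hy => by
      have : deriv g y = 0 := by
        apply image_eq_zero_of_notMem_tsupport (f := deriv g)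
        intro h
        have := hpos (closure_minimal support_deriv_subset (isClosed_tsupport g) h)
        simp only [Set.mem_Ioi] at this
        linarith
      simp [this])]
    have h1 := Measure.integral_comp_mul_left (fun s => (F s / 2 + δ * deriv F s) ^ 2) δ
    rw [abs_of_pos (inv_pos.2 hδ), smul_eq_mul] at h1
    have h2 : ∫ s, (F s / 2 + δ * deriv F s) ^ 2 =
        1 / 4 * (∫ s, F s ^ 2) + δ ^ 2 * ∫ s, deriv F s ^ 2 := by
      have : ∀ s, (F s / 2 + δ * deriv F s) ^ 2 =
          (1 / 4 * F s ^ 2 + δ ^ 2 * deriv F s ^ 2) + δ / 2 * (2 * F s * deriv F s) := by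
        intro s; ring
      simp_rw [this]
      have hi12 : Integrable (fun s => 1 / 4 * F s ^ 2 + δ ^ 2 * deriv F s ^ 2) :=
        (hi1.const_mul _).add (hi2.const_mul _)
      rw [integral_add hi12 (hi3.const_mul _),
        integral_add (hi1.const_mul _) (hi2.const_mul _), integral_const_mul, integral_const_mul,
        integral_const_mul, hi30]
      ring
    rw [← h2, ← h1]
    congr 1
    ext t
    have hp := Real.exp_pos t
    rw [hder, div_pow, Real.sq_sqrt hp.le]
    field_simp
  rw [hN, hD]
  have : 0 < δ⁻¹ := inv_pos.2 hδ
  nlinarith [mul_lt_mul_of_pos_left hδ2 this]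

lemma aux_upper (ε : ℝ) (hε : 0 < ε) : ∃ φ : ℝ × ℝ → ℝ, ContDiff ℝ 1 φ ∧ HasCompactSupport φ ∧
      tsupport φ ⊆ {p : ℝ × ℝ | 0 < p.2} ∧ φ ≠ 0 ∧
      (∫ p : ℝ × ℝ, (fderiv ℝ φ p (1, 0) ^ 2 + fderiv ℝ φ p (0, 1) ^ 2)) <
        (1 / 4 + ε) * ∫ p : ℝ × ℝ, φ p ^ 2 / p.2 ^ 2 := by
  let b : ContDiffBump (0 : ℝ) := ⟨1, 2, one_pos, one_lt_two⟩
  set F : ℝ → ℝ := fun x => b x with hFdef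
  have hF : ContDiff ℝ 1 F := b.contDiff
  have hFc : HasCompactSupport F := b.hasCompactSupport
  have hF2 : ∀ s, F s ≠ 0 → |s| ≤ 2 := by
    intro s hs
    have : s ∈ Function.support b := hs
    rw [b.support_eq] at this
    simp [b] at this
    exact this.le
  have hF'c : Continuous (deriv F) := hF.continuous_deriv le_rfl
  have hsq : ∀ f : ℝ → ℝ, HasCompactSupport f → HasCompactSupport (fun s => f s ^ 2) :=
    fun f hf => hf.mono fun x hx h0 => hx (by simp [h0])
  have hA : 0 < ∫ s, F s ^ 2 := by
    apply (hF.continuous.pow 2).integral_pos_of_hasCompactSupport_nonneg_nonzero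
      (hsq F hFc) (x := (0 : ℝ)) (fun s => sq_nonneg _)
    have : F 0 = 1 := b.one_of_mem_closedBall (by simp [b])
    simp [this]
  obtain ⟨g, hg, hgc, hgs, hlt⟩ := aux_oneD F hF hFc hF2 hA ε hε
  have hB : 0 ≤ ∫ s, deriv F s ^ 2 := integral_nonneg fun s => sq_nonneg _
  have hC : 0 ≤ ∫ y, g y ^ 2 := integral_nonneg fun s => sq_nonneg _
  obtain ⟨η, hη, hη2⟩ := aux_small _ _ (mul_nonneg hB hC)
    (mul_pos hA (sub_pos.2 hlt))
  set φ : ℝ × ℝ → ℝ := fun p => F (η * p.1) * g p.2 with hφ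
  have hφ1 : ContDiff ℝ 1 φ :=
    (hF.comp (contDiff_const.mul contDiff_fst)).mul (hg.comp contDiff_snd)
  have hsupp : tsupport φ ⊆ Set.Icc (-(2 / η)) (2 / η) ×ˢ tsupport g := by
    apply closure_minimal _ (isClosed_Icc.prod (isClosed_tsupport g))
    intro p hp
    have h1 : F (η * p.1) ≠ 0 := fun h => hp (by simp [hφ, h])
    have h2 : g p.2 ≠ 0 := fun h => hp (by simp [hφ, h])
    have h3 := abs_le.1 (hF2 _ h1)
    refine ⟨⟨?_, ?_⟩, subset_tsupport g h2⟩
    · rw [← neg_div, div_le_iff₀ hη]; linarith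
    · rw [le_div_iff₀ hη]; linarith
  have hφc : HasCompactSupport φ :=
    (isCompact_Icc.prod hgc).of_isClosed_subset (isClosed_tsupport φ) hsupp
  have hφs : tsupport φ ⊆ {p : ℝ × ℝ | 0 < p.2} := fun p hp => hgs (hsupp hp).2
  have hd1 : ∀ p : ℝ × ℝ, fderiv ℝ φ p (1, 0) = η * deriv F (η * p.1) * g p.2 := by
    intro p
    have h1 : HasFDerivAt φ (fderiv ℝ φ p) p := (hφ1.differentiable one_ne_zero _).hasFDerivAt
    have h2 : HasDerivAt (fun x : ℝ => (x, p.2)) ((1 : ℝ), (0 : ℝ)) p.1 :=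
      (hasDerivAt_id p.1).prodMk (hasDerivAt_const p.1 p.2)
    have h3 := HasFDerivAt.comp_hasDerivAt p.1 (f := fun x : ℝ => (x, p.2)) h1 h2
    have h4 : HasDerivAt F (deriv F (η * p.1)) (η * p.1) :=
      (hF.differentiable one_ne_zero _).hasDerivAt
    have h5 := (h4.comp p.1 ((hasDerivAt_id p.1).const_mul η)).mul_const (g p.2)
    rw [h3.unique h5]
    ring
  have hd2 : ∀ p : ℝ × ℝ, fderiv ℝ φ p (0, 1) = F (η * p.1) * deriv g p.2 := by
    intro p
    have h1 : HasFDerivAt φ (fderiv ℝ φ p) p := (hφ1.differentiable one_ne_zero _).hasFDerivAt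
    have h2 : HasDerivAt (fun y : ℝ => (p.1, y)) ((0 : ℝ), (1 : ℝ)) p.2 :=
      (hasDerivAt_const p.2 p.1).prodMk (hasDerivAt_id p.2)
    have h3 := HasFDerivAt.comp_hasDerivAt p.2 (f := fun y : ℝ => (p.1, y)) h1 h2
    have h4 : HasDerivAt g (deriv g p.2) p.2 := (hg.differentiable one_ne_zero _).hasDerivAt
    exact h3.unique (h4.const_mul (F (η * p.1)))
  have hd : ∀ v : ℝ × ℝ, Integrable (fun p : ℝ × ℝ => fderiv ℝ φ p v ^ 2) := by
    intro v
    apply Continuous.integrable_of_hasCompactSupport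
    · exact ((hφ1.continuous_fderiv one_ne_zero).clm_apply continuous_const).pow 2
    · apply (hφc.fderiv_apply (𝕜 := ℝ) v).mono
      intro x hx h0
      apply hx
      simp only at h0
      simp [h0]
  have hsc : ∀ H : ℝ → ℝ, ∫ x, H (η * x) = η⁻¹ * ∫ x, H x := by
    intro H
    rw [Measure.integral_comp_mul_left, abs_of_pos (inv_pos.2 hη), smul_eq_mul]
  have i1 : ∫ p : ℝ × ℝ, fderiv ℝ φ p (1, 0) ^ 2 =
      η ^ 2 * (η⁻¹ * ∫ s, deriv F s ^ 2) * ∫ y, g y ^ 2 := by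
    rw [← hsc (fun s => deriv F s ^ 2), ← integral_const_mul (η ^ 2), Measure.volume_eq_prod,
      ← integral_prod_mul]
    congr 1; ext p; rw [hd1]; ring
  have i2 : ∫ p : ℝ × ℝ, fderiv ℝ φ p (0, 1) ^ 2 =
      (η⁻¹ * ∫ s, F s ^ 2) * ∫ y, deriv g y ^ 2 := by
    rw [← hsc (fun s => F s ^ 2), Measure.volume_eq_prod, ← integral_prod_mul]
    congr 1; ext p; rw [hd2]; ring
  have i3 : ∫ p : ℝ × ℝ, φ p ^ 2 / p.2 ^ 2 =
      (η⁻¹ * ∫ s, F s ^ 2) * ∫ y, g y ^ 2 / y ^ 2 := by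
    rw [← hsc (fun s => F s ^ 2), Measure.volume_eq_prod,
      ← integral_prod_mul (fun x => F (η * x) ^ 2) (fun y => g y ^ 2 / y ^ 2)]
    congr 1; ext p; simp only [hφ]; ring
  have hfin : (∫ p : ℝ × ℝ, (fderiv ℝ φ p (1, 0) ^ 2 + fderiv ℝ φ p (0, 1) ^ 2)) <
        (1 / 4 + ε) * ∫ p : ℝ × ℝ, φ p ^ 2 / p.2 ^ 2 := by
    rw [integral_add (hd _) (hd _), i1, i2, i3]
    have := mul_lt_mul_of_pos_left hη2 (inv_pos.2 hη)
    linarith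
  refine ⟨φ, hφ1, hφc, hφs, ?_, hfin⟩
  intro h0
  rw [h0] at hfin
  simp at hfin


/-- Sharpness of the constant 1/4: for every `ε > 0` there is a nonzero compactly supported C¹
function on the upper half-plane whose Dirichlet energy is less than `(1/4 + ε)` times its
hyperbolic L² norm; consequently the infimum of the hyperbolic Rayleigh quotients equals `1/4`. -/
theorem stmt_2 :
    (∀ ε > (0 : ℝ), ∃ φ : ℝ × ℝ → ℝ, ContDiff ℝ 1 φ ∧ HasCompactSupport φ ∧
      tsupport φ ⊆ {p : ℝ × ℝ | 0 < p.2} ∧ φ ≠ 0 ∧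
      (∫ p : ℝ × ℝ, (fderiv ℝ φ p (1, 0) ^ 2 + fderiv ℝ φ p (0, 1) ^ 2)) <
        (1 / 4 + ε) * ∫ p : ℝ × ℝ, φ p ^ 2 / p.2 ^ 2) ∧
    sInf {r : ℝ | ∃ φ : ℝ × ℝ → ℝ, ContDiff ℝ 1 φ ∧ HasCompactSupport φ ∧
        tsupport φ ⊆ {p : ℝ × ℝ | 0 < p.2} ∧ φ ≠ 0 ∧
        r = (∫ p : ℝ × ℝ, (fderiv ℝ φ p (1, 0) ^ 2 + fderiv ℝ φ p (0, 1) ^ 2)) /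
            (∫ p : ℝ × ℝ, φ p ^ 2 / p.2 ^ 2)} = 1 / 4 := by
  refine ⟨fun ε hε => aux_upper ε hε, ?_⟩
  apply le_antisymm
  · apply le_of_forall_pos_le_add
    intro ε hε
    obtain ⟨φ, h1, h2, h3, h4, h5⟩ := aux_upper ε hε
    have hpos := aux_den_pos h1 h2 h3 h4
    refine le_trans (csInf_le ⟨0, ?_⟩ ⟨φ, h1, h2, h3, h4, rfl⟩) ?_
    · rintro r ⟨ψ, -, -, -, -, rfl⟩
      exact div_nonneg (integral_nonneg fun p => by positivity)
        (integral_nonneg fun p => by positivity)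
    · rw [div_le_iff₀ hpos]
      exact h5.le
  · apply le_csInf
    · obtain ⟨φ, h1, h2, h3, h4, -⟩ := aux_upper 1 one_pos
      exact ⟨_, φ, h1, h2, h3, h4, rfl⟩
    · rintro r ⟨φ, h1, h2, h3, h4, rfl⟩
      rw [le_div_iff₀ (aux_den_pos h1 h2 h3 h4)]
      exact aux_lower h1 h2 h3
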